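/- Let γ = 1 − 2π⁻². Then the function I₀(α) := ∫_{ω⁻_α}^{ω⁺_α} dt / √(f_α(t)) is strictly increasing on the interval (γ^{−γ}(1−γ)^{γ−1}, ∞). -/

import Mathlib

open MeasureTheory Set Real

noncomputable section

/-- `f_α(t) = α t^{2γ} − t² − 1`. -/
def fA (γ α t : ℝ) : ℝ := α * t ^ (2 * γ) - t ^ 2 - 1

/-- The derivative `f_α'(t) = 2αγ t^{2γ−1} − 2t`. -/
def fA' (γ α t : ℝ) : ℝ := 2 * α * γ * t ^ (2 * γ - 1) - 2 * t

/-- The second derivative `f_α''(t) = 2αγ(2γ−1) t^{2γ−2} − 2`. -/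
def fA'' (γ α t : ℝ) : ℝ := 2 * α * γ * (2 * γ - 1) * t ^ (2 * γ - 2) - 2

/-- `ψ_α := (f_α')² − 2 f_α f_α''`. -/
def psiA (γ α t : ℝ) : ℝ := (fA' γ α t) ^ 2 - 2 * fA γ α t * fA'' γ α t

/-- The left endpoint `ω⁻_α` of the positivity interval of `f_α`. -/
def omegaMinus (γ α : ℝ) : ℝ := sInf {t : ℝ | 0 < t ∧ 0 < fA γ α t}

/-- The right endpoint `ω⁺_α` of the positivity interval of `f_α`. -/
def omegaPlus (γ α : ℝ) : ℝ := sSup {t : ℝ | 0 < t ∧ 0 < fA γ α t}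

/-- `I₀(α) := ∫_{ω⁻_α}^{ω⁺_α} dt / √(f_α(t))`. -/
def I0 (γ α : ℝ) : ℝ :=
  ∫ t in omegaMinus γ α..omegaPlus γ α, 1 / Real.sqrt (fA γ α t)

/-!
In units of its critical point, `f_α` is an energy minus a potential `V` with a single well, and
the energy increases with `α`; so `I₀` is, up to a constant factor, the period of oscillation in the
well as a function of the energy `h`.

With `s = V / h` as the variable of integration this period is the integral of
`P (h s) / √(s (1 - s))` over `(0, 1)`, where `P v = (√V / V') (x₊) - (√V / V') (x₋)` and `x₋ < x₊`
are the two points at which `V = v`. It increases with `h` as soon as `P` increases. Since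
`V x₋ = V x₊`, any multiple `k √V` may be added to `√V / V'` without changing `P`, and the sum is
increasing when `ψ = V'² - 2 V V'' + k V'³` is positive away from the bottom of the well. For
`k = 0` this fails on one side; the good `k` is the one for which the cubic term of `ψ` at the
bottom vanishes. Then `ψ' = 2 V''' G` with `V''' > 0`, and `G` vanishes at the bottom and increases
wherever `V'' > 0`, while `G < 0` where `V'' ≤ 0`.
-/

section Monotonicity

variable {f f' : ℝ → ℝ} {s : Set ℝ} {m : ℝ}

lemma strictMonoOn_of_hasDerivAt_pos_of_ne (hs : s.OrdConnected)
    (hf : ∀ x ∈ s, HasDerivAt f (f' x) x) (hf' : ∀ x ∈ s, x ≠ m → 0 < f' x) :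
    StrictMonoOn f s := by
  have lt_of_notMem : ∀ a ∈ s, ∀ b ∈ s, a < b → m ∉ Ioo a b → f a < f b := by
    intro a ha b hb hab hm
    have hsub : Icc a b ⊆ s := hs.out ha hb
    refine strictMonoOn_of_hasDerivWithinAt_pos (f' := f') (convex_Icc a b)
      (fun x hx => (hf x (hsub hx)).continuousAt.continuousWithinAt)
      (fun x hx => (hf x (hsub (interior_subset hx))).hasDerivWithinAt) (fun x hx => ?_)
      (left_mem_Icc.2 hab.le) (right_mem_Icc.2 hab.le) hab
    rw [interior_Icc] at hx
    exact hf' x (hsub (Ioo_subset_Icc_self hx)) fun h => hm (h ▸ hx)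
  intro a ha b hb hab
  by_cases hm : m ∈ Ioo a b
  · have hms : m ∈ s := hs.out ha hb (Ioo_subset_Icc_self hm)
    exact (lt_of_notMem a ha m hms hm.1 (by simp)).trans (lt_of_notMem m hms b hb hm.2 (by simp))
  · exact lt_of_notMem a ha b hb hab hm

lemma strictMonoOn_inter_Ici_of_hasDerivAt_pos (hs : s.OrdConnected)
    (hf : ∀ x ∈ s, HasDerivAt f (f' x) x) (hf' : ∀ x ∈ s, m < x → 0 < f' x) :
    StrictMonoOn f (s ∩ Ici m) :=
  strictMonoOn_of_hasDerivAt_pos_of_ne (m := m) (hs.inter ordConnected_Ici)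
    (fun x hx => hf x hx.1) (fun x hx hne => hf' x hx.1 (lt_of_le_of_ne hx.2 hne.symm))

lemma strictAntiOn_inter_Iic_of_hasDerivAt_neg (hs : s.OrdConnected)
    (hf : ∀ x ∈ s, HasDerivAt f (f' x) x) (hf' : ∀ x ∈ s, x < m → f' x < 0) :
    StrictAntiOn f (s ∩ Iic m) := by
  have h := strictMonoOn_of_hasDerivAt_pos_of_ne (m := m) (hs.inter ordConnected_Iic)
    (fun x hx => (hf x hx.1).neg)
    (fun x hx hne => neg_pos.2 (hf' x hx.1 (lt_of_le_of_ne hx.2 hne)))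
  exact fun a ha b hb hab => neg_lt_neg_iff.1 (h ha hb hab)

lemma lt_of_hasDerivAt_neg_of_hasDerivAt_pos {x : ℝ} (hs : s.OrdConnected) (hm : m ∈ s)
    (hf : ∀ x ∈ s, HasDerivAt f (f' x) x) (hneg : ∀ x ∈ s, x < m → f' x < 0)
    (hpos : ∀ x ∈ s, m < x → 0 < f' x) (hx : x ∈ s) (hxm : x ≠ m) : f m < f x := by
  rcases lt_or_gt_of_ne hxm with h | h
  · exact strictAntiOn_inter_Iic_of_hasDerivAt_neg hs hf hneg ⟨hx, h.le⟩ ⟨hm, self_mem_Iic⟩ h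
  · exact strictMonoOn_inter_Ici_of_hasDerivAt_pos hs hf hpos ⟨hm, self_mem_Ici⟩ ⟨hx, h.le⟩ h

end Monotonicity

lemma intervalIntegral_csInf_csSup {E : Type*} [NormedAddCommGroup E] [NormedSpace ℝ E]
    {s : Set ℝ} (hs : s.OrdConnected) (hne : s.Nonempty) (hb : BddBelow s) (ha : BddAbove s)
    (f : ℝ → E) : ∫ x in sInf s..sSup s, f x = ∫ x in s, f x := by
  have hIoo : Ioo (sInf s) (sSup s) ⊆ s :=
    IsConnected.Ioo_csInf_csSup_subset ⟨hne, hs.isPreconnected⟩ hb ha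
  have hIcc : s ⊆ Icc (sInf s) (sSup s) := subset_Icc_csInf_csSup hb ha
  rw [intervalIntegral.integral_of_le (csInf_le_csSup hne hb ha), integral_Ioc_eq_integral_Ioo]
  exact setIntegral_congr_set
    (hIoo.eventuallyLE.antisymm (hIcc.eventuallyLE.trans Ioo_ae_eq_Icc.symm.le))

lemma integrableOn_inv_sqrt_mul_one_sub :
    IntegrableOn (fun s : ℝ => (√(s * (1 - s)))⁻¹) (Ioo 0 1) := by
  have h : IntervalIntegrable (fun s : ℝ => √(1 - (2 * s - 1) ^ 2)⁻¹) volume 0 1 := by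
    simpa using (Polynomial.Chebyshev.intervalIntegrable_sqrt_one_sub_sq_inv.comp_sub_right
      1).comp_mul_left (c := 2)
  rw [intervalIntegrable_iff_integrableOn_Ioo_of_le zero_le_one] at h
  refine IntegrableOn.congr_fun (h.const_mul 2) (fun s _ => ?_) measurableSet_Ioo
  have hsq : 1 - (2 * s - 1) ^ 2 = 2 ^ 2 * (s * (1 - s)) := by ring
  simp only [hsq, sqrt_inv, sqrt_mul (sq_nonneg (2 : ℝ)), sqrt_sq zero_le_two]
  field_simp

/-- An open set `B` on which the potential `V`, with derivative `V'`, is injective without critical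
points and takes all the values in `(0, H)`: the part of a well on one side of its bottom. -/
structure IsBranch (V V' : ℝ → ℝ) (B : Set ℝ) (H : ℝ) : Prop where
  isOpen : IsOpen B
  hasDerivAt : ∀ x ∈ B, HasDerivAt V (V' x) x
  injOn : InjOn V B
  deriv_ne_zero : ∀ x ∈ B, V' x ≠ 0
  subset_image : Ioo 0 H ⊆ V '' B
  pos : ∀ x ∈ B, 0 < V x

/-- The function `√V / |V'|` on a branch `B`, as a function of the value `v` of `V`. Multiplied by
`1 / √(s (1 - s))`, it is the density of `∫ dx / √(h - V)` in the variable `s = V / h`. -/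
def timeDensity (V V' : ℝ → ℝ) (B : Set ℝ) (v : ℝ) : ℝ :=
  √v / |V' (Function.invFunOn V B v)|

lemma timeDensity_nonneg (V V' : ℝ → ℝ) (B : Set ℝ) (v : ℝ) : 0 ≤ timeDensity V V' B v := by
  unfold timeDensity
  positivity

lemma mul_mem_Ioo_of_mem_Ioo {h s : ℝ} (h0 : 0 < h) (hs : s ∈ Ioo 0 1) : h * s ∈ Ioo 0 h :=
  ⟨mul_pos h0 hs.1, mul_lt_of_lt_one_right h0 hs.2⟩

namespace IsBranch

variable {V V' : ℝ → ℝ} {B : Set ℝ} {H h : ℝ}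

lemma timeDensity_apply (hB : IsBranch V V' B H) {x : ℝ} (hx : x ∈ B) :
    timeDensity V V' B (V x) = √(V x) / |V' x| := by
  rw [timeDensity, hB.injOn.leftInvOn_invFunOn hx]

lemma isOpen_sublevel (hB : IsBranch V V' B H) : IsOpen {x ∈ B | V x < h} :=
  ContinuousOn.isOpen_inter_preimage
    (fun x hx => (hB.hasDerivAt x hx).continuousAt.continuousWithinAt) hB.isOpen isOpen_Iio

lemma image_div_sublevel (hB : IsBranch V V' B H) (hh : h ∈ Ioo 0 H) :
    (fun x => V x / h) '' {x ∈ B | V x < h} = Ioo 0 1 := by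
  ext s
  constructor
  · rintro ⟨x, ⟨hx, hxh⟩, rfl⟩
    exact ⟨div_pos (hB.pos x hx) hh.1, (div_lt_one hh.1).2 hxh⟩
  · intro hs
    have hhs : h * s ∈ Ioo 0 h := mul_mem_Ioo_of_mem_Ioo hh.1 hs
    obtain ⟨x, hx, hxs⟩ := hB.subset_image (Ioo_subset_Ioo_right hh.2.le hhs)
    exact ⟨x, ⟨hx, hxs.trans_lt hhs.2⟩, by simp only [hxs, mul_div_cancel_left₀ s hh.1.ne']⟩

lemma abs_deriv_smul_timeDensity (hB : IsBranch V V' B H) {x : ℝ} (hx : x ∈ {x ∈ B | V x < h}) :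
    |V' x / h| • (timeDensity V V' B (h * (V x / h)) * (√(V x / h * (1 - V x / h)))⁻¹) =
      1 / √(h - V x) := by
  obtain ⟨hxB, hxh⟩ := hx
  have hV : 0 < V x := hB.pos x hxB
  have hh : 0 < h := hV.trans hxh
  have hV' : 0 < |V' x| := abs_pos.2 (hB.deriv_ne_zero x hxB)
  have hsub : 0 < √(h - V x) := sqrt_pos.2 (sub_pos.2 hxh)
  have hweight : √(V x / h * (1 - V x / h)) = √(V x) * √(h - V x) / h := by
    rw [show V x / h * (1 - V x / h) = V x * (h - V x) / h ^ 2 by field_simp,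
      sqrt_div (mul_pos hV (sub_pos.2 hxh)).le, sqrt_sq hh.le, sqrt_mul hV.le]
  rw [mul_div_cancel₀ _ hh.ne', hB.timeDensity_apply hxB, hweight, abs_div, abs_of_pos hh,
    smul_eq_mul]
  field_simp

lemma integrableOn_Ioo_iff (hB : IsBranch V V' B H) (hh : h ∈ Ioo 0 H) (u : ℝ → ℝ) :
    IntegrableOn u (Ioo 0 1) ↔
      IntegrableOn (fun x => |V' x / h| • u (V x / h)) {x ∈ B | V x < h} := by
  rw [← hB.image_div_sublevel hh]
  exact integrableOn_image_iff_integrableOn_abs_deriv_smul hB.isOpen_sublevel.measurableSet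
    (fun x hx => ((hB.hasDerivAt x hx.1).div_const h).hasDerivWithinAt)
    (fun x hx y hy hxy => hB.injOn hx.1 hy.1 ((div_left_inj' hh.1.ne').1 hxy)) u

lemma setIntegral_Ioo (hB : IsBranch V V' B H) (hh : h ∈ Ioo 0 H) (u : ℝ → ℝ) :
    ∫ s in Ioo 0 1, u s = ∫ x in {x ∈ B | V x < h}, |V' x / h| • u (V x / h) := by
  rw [← hB.image_div_sublevel hh]
  exact integral_image_eq_integral_abs_deriv_smul hB.isOpen_sublevel.measurableSet
    (fun x hx => ((hB.hasDerivAt x hx.1).div_const h).hasDerivWithinAt)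
    (fun x hx y hy hxy => hB.injOn hx.1 hy.1 ((div_left_inj' hh.1.ne').1 hxy)) u

lemma integrableOn_sublevel_iff (hB : IsBranch V V' B H) (hh : h ∈ Ioo 0 H) :
    IntegrableOn (fun x => 1 / √(h - V x)) {x ∈ B | V x < h} ↔
      IntegrableOn (fun s => timeDensity V V' B (h * s) * (√(s * (1 - s)))⁻¹) (Ioo 0 1) := by
  rw [hB.integrableOn_Ioo_iff hh]
  exact integrableOn_congr_fun (fun x hx => (hB.abs_deriv_smul_timeDensity hx).symm)
    hB.isOpen_sublevel.measurableSet

lemma setIntegral_sublevel (hB : IsBranch V V' B H) (hh : h ∈ Ioo 0 H) :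
    ∫ x in {x ∈ B | V x < h}, 1 / √(h - V x) =
      ∫ s in Ioo 0 1, timeDensity V V' B (h * s) * (√(s * (1 - s)))⁻¹ := by
  rw [hB.setIntegral_Ioo hh]
  exact setIntegral_congr_fun hB.isOpen_sublevel.measurableSet
    fun x hx => (hB.abs_deriv_smul_timeDensity hx).symm

lemma integrableOn_sublevel (hB : IsBranch V V' B H) (hh : h ∈ Ioo 0 H) {C : ℝ}
    (hC : ∀ v ∈ Ioo 0 h, timeDensity V V' B v ≤ C) :
    IntegrableOn (fun x => 1 / √(h - V x)) {x ∈ B | V x < h} := by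
  have hmeas : MeasurableSet {x ∈ B | V x < h} := hB.isOpen_sublevel.measurableSet
  have hcont : ContinuousOn (fun x => 1 / √(h - V x)) {x ∈ B | V x < h} := fun x hx =>
    (continuousAt_const.div (continuousAt_const.sub (hB.hasDerivAt x hx.1).continuousAt).sqrt
      (sqrt_pos.2 (sub_pos.2 hx.2)).ne').continuousWithinAt
  have hdom := (hB.integrableOn_Ioo_iff hh _).1 (integrableOn_inv_sqrt_mul_one_sub.const_mul C)
  refine Integrable.mono' hdom (hcont.aestronglyMeasurable hmeas) ?_
  filter_upwards [ae_restrict_mem hmeas] with x hx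
  rw [norm_of_nonneg (by positivity), ← hB.abs_deriv_smul_timeDensity hx,
    mul_div_cancel₀ _ hh.1.ne']
  gcongr
  exact hC _ ⟨hB.pos x hx.1, hx.2⟩

end IsBranch

/-- A potential well on `D`: `V`, with derivative `V'`, decreases to the value `0` at the bottom
`m`, increases after it, and takes on either side of `m` all the values in `(0, H)`. -/
structure IsPotentialWell (V V' : ℝ → ℝ) (D : Set ℝ) (m H : ℝ) : Prop where
  isOpen : IsOpen D
  ordConnected : D.OrdConnected
  bottom_mem : m ∈ D
  apply_bottom : V m = 0
  hasDerivAt : ∀ x ∈ D, HasDerivAt V (V' x) x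
  deriv_neg : ∀ x ∈ D, x < m → V' x < 0
  deriv_pos : ∀ x ∈ D, m < x → 0 < V' x
  subset_image_left : Ioo 0 H ⊆ V '' (D ∩ Iio m)
  subset_image_right : Ioo 0 H ⊆ V '' (D ∩ Ioi m)

/-- The integral `∫ dx / √(h - V)` over the sublevel set `{V < h}` in `D`: up to a constant factor,
the period of the oscillation of energy `h` in the potential `V`. -/
def period (V : ℝ → ℝ) (D : Set ℝ) (h : ℝ) : ℝ := ∫ x in {x ∈ D | V x < h}, 1 / √(h - V x)

/-- The sum of the time densities of the two sides of a well with bottom `m`. -/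
def periodDensity (V V' : ℝ → ℝ) (D : Set ℝ) (m v : ℝ) : ℝ :=
  timeDensity V V' (D ∩ Iio m) v + timeDensity V V' (D ∩ Ioi m) v

namespace IsPotentialWell

variable {V V' : ℝ → ℝ} {D : Set ℝ} {m H h : ℝ}

lemma strictAntiOn (hV : IsPotentialWell V V' D m H) : StrictAntiOn V (D ∩ Iic m) :=
  strictAntiOn_inter_Iic_of_hasDerivAt_neg hV.ordConnected hV.hasDerivAt hV.deriv_neg

lemma strictMonoOn (hV : IsPotentialWell V V' D m H) : StrictMonoOn V (D ∩ Ici m) :=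
  strictMonoOn_inter_Ici_of_hasDerivAt_pos hV.ordConnected hV.hasDerivAt hV.deriv_pos

lemma pos (hV : IsPotentialWell V V' D m H) {x : ℝ} (hx : x ∈ D) (hxm : x ≠ m) : 0 < V x :=
  hV.apply_bottom ▸ lt_of_hasDerivAt_neg_of_hasDerivAt_pos hV.ordConnected hV.bottom_mem
    hV.hasDerivAt hV.deriv_neg hV.deriv_pos hx hxm

lemma deriv_ne_zero (hV : IsPotentialWell V V' D m H) {x : ℝ} (hx : x ∈ D) (hxm : x ≠ m) :
    V' x ≠ 0 :=
  hxm.lt_or_gt.elim (fun h => (hV.deriv_neg x hx h).ne) fun h => (hV.deriv_pos x hx h).ne'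

lemma isBranch_left (hV : IsPotentialWell V V' D m H) : IsBranch V V' (D ∩ Iio m) H where
  isOpen := hV.isOpen.inter isOpen_Iio
  hasDerivAt x hx := hV.hasDerivAt x hx.1
  injOn := hV.strictAntiOn.injOn.mono (inter_subset_inter_right D Iio_subset_Iic_self)
  deriv_ne_zero _ hx := hV.deriv_ne_zero hx.1 hx.2.ne
  subset_image := hV.subset_image_left
  pos _ hx := hV.pos hx.1 hx.2.ne

lemma isBranch_right (hV : IsPotentialWell V V' D m H) : IsBranch V V' (D ∩ Ioi m) H where
  isOpen := hV.isOpen.inter isOpen_Ioi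
  hasDerivAt x hx := hV.hasDerivAt x hx.1
  injOn := hV.strictMonoOn.injOn.mono (inter_subset_inter_right D Ioi_subset_Ici_self)
  deriv_ne_zero _ hx := hV.deriv_ne_zero hx.1 (mem_Ioi.1 hx.2).ne'
  subset_image := hV.subset_image_right
  pos _ hx := hV.pos hx.1 (mem_Ioi.1 hx.2).ne'

lemma ordConnected_sublevel (hV : IsPotentialWell V V' D m H) (h : ℝ) :
    {x ∈ D | V x < h}.OrdConnected := by
  refine ⟨fun x hx y hy z hz => ?_⟩
  have hzD : z ∈ D := hV.ordConnected.out hx.1 hy.1 hz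
  refine ⟨hzD, ?_⟩
  rcases le_total z m with hzm | hzm
  · exact (hV.strictAntiOn.antitoneOn ⟨hx.1, hz.1.trans hzm⟩ ⟨hzD, hzm⟩ hz.1).trans_lt hx.2
  · exact (hV.strictMonoOn.monotoneOn ⟨hzD, hzm⟩ ⟨hy.1, hzm.trans hz.2⟩ hz.2).trans_lt hy.2

lemma bddBelow_sublevel (hV : IsPotentialWell V V' D m H) (hh : h ∈ Ioo 0 H) :
    BddBelow {x ∈ D | V x < h} := by
  obtain ⟨a, ⟨haD, ham⟩, ha⟩ := hV.subset_image_left hh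
  refine ⟨a, fun x hx => le_of_not_gt fun hxa => hx.2.not_ge ?_⟩
  exact ha ▸ (hV.strictAntiOn ⟨hx.1, (hxa.trans ham).le⟩ ⟨haD, Iio_subset_Iic_self ham⟩ hxa).le

lemma bddAbove_sublevel (hV : IsPotentialWell V V' D m H) (hh : h ∈ Ioo 0 H) :
    BddAbove {x ∈ D | V x < h} := by
  obtain ⟨b, ⟨hbD, hmb⟩, hb⟩ := hV.subset_image_right hh
  refine ⟨b, fun x hx => le_of_not_gt fun hbx => hx.2.not_ge ?_⟩
  exact hb ▸ (hV.strictMonoOn ⟨hbD, Ioi_subset_Ici_self hmb⟩ ⟨hx.1, (lt_trans hmb hbx).le⟩ hbx).le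

lemma intervalIntegral_sublevel (hV : IsPotentialWell V V' D m H) (hh : h ∈ Ioo 0 H)
    (f : ℝ → ℝ) :
    ∫ x in sInf {x ∈ D | V x < h}..sSup {x ∈ D | V x < h}, f x =
      ∫ x in {x ∈ D | V x < h}, f x :=
  intervalIntegral_csInf_csSup (hV.ordConnected_sublevel h)
    ⟨m, hV.bottom_mem, hV.apply_bottom.trans_lt hh.1⟩ (hV.bddBelow_sublevel hh)
    (hV.bddAbove_sublevel hh) f

lemma period_eq_add (hV : IsPotentialWell V V' D m H)
    (hl : IntegrableOn (fun x => 1 / √(h - V x)) {x ∈ D ∩ Iio m | V x < h})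
    (hr : IntegrableOn (fun x => 1 / √(h - V x)) {x ∈ D ∩ Ioi m | V x < h}) :
    period V D h = (∫ x in {x ∈ D ∩ Iio m | V x < h}, 1 / √(h - V x)) +
      ∫ x in {x ∈ D ∩ Ioi m | V x < h}, 1 / √(h - V x) := by
  have hdisj : Disjoint {x ∈ D ∩ Iio m | V x < h} {x ∈ D ∩ Ioi m | V x < h} :=
    disjoint_left.2 fun x hx hx' => lt_asymm (mem_Iio.1 hx.1.2) hx'.1.2
  have hunion : {x ∈ D ∩ Iio m | V x < h} ∪ {x ∈ D ∩ Ioi m | V x < h} =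
      {x ∈ D | V x < h} \ {m} := by
    ext x
    simp only [mem_union, mem_sdiff, mem_ofPred_eq, mem_inter_iff, mem_Iio, mem_Ioi,
      mem_singleton_iff, ← ne_eq, ← lt_or_lt_iff_ne]
    tauto
  rw [← setIntegral_union hdisj hV.isBranch_right.isOpen_sublevel.measurableSet hl hr, hunion]
  exact (setIntegral_congr_set (sdiff_null_ae_eq_self (by simp))).symm

lemma integrableOn_branches (hV : IsPotentialWell V V' D m H)
    (hmono : MonotoneOn (periodDensity V V' D m) (Ioo 0 H)) (hh : h ∈ Ioo 0 H) :
    IntegrableOn (fun x => 1 / √(h - V x)) {x ∈ D ∩ Iio m | V x < h} ∧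
      IntegrableOn (fun x => 1 / √(h - V x)) {x ∈ D ∩ Ioi m | V x < h} := by
  have hle : ∀ v ∈ Ioo 0 h, periodDensity V V' D m v ≤ periodDensity V V' D m h :=
    fun v hv => hmono (Ioo_subset_Ioo_right hh.2.le hv) hh hv.2.le
  exact ⟨hV.isBranch_left.integrableOn_sublevel hh fun v hv =>
      (le_add_of_nonneg_right (timeDensity_nonneg V V' _ v)).trans (hle v hv),
    hV.isBranch_right.integrableOn_sublevel hh fun v hv =>
      (le_add_of_nonneg_left (timeDensity_nonneg V V' _ v)).trans (hle v hv)⟩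

lemma integrableOn_periodDensity (hV : IsPotentialWell V V' D m H)
    (hmono : MonotoneOn (periodDensity V V' D m) (Ioo 0 H)) (hh : h ∈ Ioo 0 H) :
    IntegrableOn (fun s => periodDensity V V' D m (h * s) * (√(s * (1 - s)))⁻¹) (Ioo 0 1) := by
  obtain ⟨hl, hr⟩ := hV.integrableOn_branches hmono hh
  simp only [periodDensity, add_mul]
  exact ((hV.isBranch_left.integrableOn_sublevel_iff hh).1 hl).add
    ((hV.isBranch_right.integrableOn_sublevel_iff hh).1 hr)

lemma period_eq_integral_periodDensity (hV : IsPotentialWell V V' D m H)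
    (hmono : MonotoneOn (periodDensity V V' D m) (Ioo 0 H)) (hh : h ∈ Ioo 0 H) :
    period V D h = ∫ s in Ioo 0 1, periodDensity V V' D m (h * s) * (√(s * (1 - s)))⁻¹ := by
  obtain ⟨hl, hr⟩ := hV.integrableOn_branches hmono hh
  simp only [periodDensity, add_mul]
  rw [hV.period_eq_add hl hr, hV.isBranch_left.setIntegral_sublevel hh,
    hV.isBranch_right.setIntegral_sublevel hh]
  exact (integral_add ((hV.isBranch_left.integrableOn_sublevel_iff hh).1 hl)
    ((hV.isBranch_right.integrableOn_sublevel_iff hh).1 hr)).symm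

theorem strictMonoOn_period_of_periodDensity (hV : IsPotentialWell V V' D m H)
    (hmono : StrictMonoOn (periodDensity V V' D m) (Ioo 0 H)) :
    StrictMonoOn (period V D) (Ioo 0 H) := by
  intro h hh k hk hhk
  have hih := hV.integrableOn_periodDensity hmono.monotoneOn hh
  have hik := hV.integrableOn_periodDensity hmono.monotoneOn hk
  rw [hV.period_eq_integral_periodDensity hmono.monotoneOn hh,
    hV.period_eq_integral_periodDensity hmono.monotoneOn hk, ← sub_pos, ← integral_sub hik hih,
    ← integral_Ioc_eq_integral_Ioo, ← intervalIntegral.integral_of_le zero_le_one]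
  refine intervalIntegral.intervalIntegral_pos_of_pos_on
    ((intervalIntegrable_iff_integrableOn_Ioo_of_le zero_le_one).2 (hik.sub hih))
    (fun s hs => ?_) zero_lt_one
  have hdens : periodDensity V V' D m (h * s) < periodDensity V V' D m (k * s) :=
    hmono (Ioo_subset_Ioo_right hh.2.le (mul_mem_Ioo_of_mem_Ioo hh.1 hs))
      (Ioo_subset_Ioo_right hk.2.le (mul_mem_Ioo_of_mem_Ioo hk.1 hs))
      (mul_lt_mul_of_pos_right hhk hs.1)
  have hweight : 0 < (√(s * (1 - s)))⁻¹ :=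
    inv_pos.2 (sqrt_pos.2 (mul_pos hs.1 (sub_pos.2 hs.2)))
  rw [← sub_mul]
  exact mul_pos (sub_pos.2 hdens) hweight

end IsPotentialWell

/-- The function `√V / V' + k √V`. On the right of a well its first term is the time density and on
the left minus the time density, while the second has the same value at both points where `V` takes
a given value, so that it cancels in the period density. -/
def correctedSlope (V V' : ℝ → ℝ) (k x : ℝ) : ℝ := √(V x) / V' x + k * √(V x)

namespace IsPotentialWell

variable {V V' V'' : ℝ → ℝ} {D : Set ℝ} {m H k : ℝ}

lemma periodDensity_eq_sub (hV : IsPotentialWell V V' D m H) (k : ℝ) {x y : ℝ}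
    (hx : x ∈ D ∩ Iio m) (hy : y ∈ D ∩ Ioi m) (hxy : V x = V y) :
    periodDensity V V' D m (V x) = correctedSlope V V' k y - correctedSlope V V' k x := by
  rw [periodDensity, hV.isBranch_left.timeDensity_apply hx, hxy,
    hV.isBranch_right.timeDensity_apply hy, abs_of_neg (hV.deriv_neg x hx.1 hx.2),
    abs_of_pos (hV.deriv_pos y hy.1 hy.2), correctedSlope, correctedSlope, hxy]
  ring

lemma strictMonoOn_periodDensity (hV : IsPotentialWell V V' D m H)
    (hl : StrictMonoOn (correctedSlope V V' k) (D ∩ Iio m))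
    (hr : StrictMonoOn (correctedSlope V V' k) (D ∩ Ioi m)) :
    StrictMonoOn (periodDensity V V' D m) (Ioo 0 H) := by
  intro v hv w hw hvw
  obtain ⟨x, hx, rfl⟩ := hV.subset_image_left hv
  obtain ⟨x', hx', hxx'⟩ := hV.subset_image_right hv
  obtain ⟨y, hy, rfl⟩ := hV.subset_image_left hw
  obtain ⟨y', hy', hyy'⟩ := hV.subset_image_right hw
  have hyx : y < x :=
    (hV.strictAntiOn.lt_iff_gt ⟨hx.1, Iio_subset_Iic_self hx.2⟩
      ⟨hy.1, Iio_subset_Iic_self hy.2⟩).1 hvw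
  have hxy' : x' < y' :=
    (hV.strictMonoOn.lt_iff_lt ⟨hx'.1, Ioi_subset_Ici_self hx'.2⟩
      ⟨hy'.1, Ioi_subset_Ici_self hy'.2⟩).1 (by rwa [hxx', hyy'])
  rw [hV.periodDensity_eq_sub k hx hx' hxx'.symm, hV.periodDensity_eq_sub k hy hy' hyy'.symm]
  exact sub_lt_sub (hr hx' hy' hxy') (hl hy hx hyx)

lemma hasDerivAt_correctedSlope (hV : IsPotentialWell V V' D m H) (k : ℝ) {x V₂ : ℝ} (hx : x ∈ D)
    (hxm : x ≠ m) (hV'' : HasDerivAt V' V₂ x) :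
    HasDerivAt (correctedSlope V V' k)
      ((V' x ^ 2 - 2 * V x * V₂ + k * V' x ^ 3) / (2 * √(V x) * V' x ^ 2)) x := by
  have hpos : 0 < V x := hV.pos hx hxm
  have hne : V' x ≠ 0 := hV.deriv_ne_zero hx hxm
  have hsqrt := (hV.hasDerivAt x hx).sqrt hpos.ne'
  refine ((hsqrt.div hV'' hne).add (hsqrt.const_mul k)).congr_deriv ?_
  have : 0 < √(V x) := sqrt_pos.2 hpos
  rw [show 2 * V x * V₂ = 2 * √(V x) ^ 2 * V₂ by rw [sq_sqrt hpos.le]]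
  field_simp

theorem strictMonoOn_period (hV : IsPotentialWell V V' D m H) (k : ℝ)
    (hV'' : ∀ x ∈ D, HasDerivAt V' (V'' x) x)
    (hpos : ∀ x ∈ D, x ≠ m → 0 < V' x ^ 2 - 2 * V x * V'' x + k * V' x ^ 3) :
    StrictMonoOn (period V D) (Ioo 0 H) := by
  have hslope : ∀ s ⊆ D, s.OrdConnected → m ∉ s → StrictMonoOn (correctedSlope V V' k) s := by
    intro s hsD hs hm
    have hne : ∀ x ∈ s, x ≠ m := fun x hx hxm => hm (hxm ▸ hx)
    refine strictMonoOn_of_hasDerivAt_pos_of_ne (m := m) hs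
      (fun x hx => hV.hasDerivAt_correctedSlope k (hsD hx) (hne x hx) (hV'' x (hsD hx)))
      fun x hx hxm => div_pos (hpos x (hsD hx) hxm) ?_
    have := sqrt_pos.2 (hV.pos (hsD hx) hxm)
    have := hV.deriv_ne_zero (hsD hx) hxm
    positivity
  exact hV.strictMonoOn_period_of_periodDensity (hV.strictMonoOn_periodDensity
    (hslope _ inter_subset_left (hV.ordConnected.inter ordConnected_Iio) (by simp))
    (hslope _ inter_subset_left (hV.ordConnected.inter ordConnected_Ioi) (by simp)))

end IsPotentialWell

section PowerPotential

/-- The potential `x² − x^{2γ} / γ`, normalised to vanish at its minimum `x = 1`. Up to scaling it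
is the potential of which `f_α` is the kinetic energy. -/
def powerPotential (γ x : ℝ) : ℝ := x ^ 2 - x ^ (2 * γ) / γ + (1 / γ - 1)

/-- The derivative of `powerPotential γ` on `(0, ∞)`. -/
def powerPotential' (γ x : ℝ) : ℝ := 2 * x * (1 - x ^ (2 * γ - 2))

/-- The second derivative of `powerPotential γ` on `(0, ∞)`. -/
def powerPotential'' (γ x : ℝ) : ℝ := 2 * (1 - (2 * γ - 1) * x ^ (2 * γ - 2))

/-- The third derivative of `powerPotential γ` on `(0, ∞)`. -/
def powerPotential''' (γ x : ℝ) : ℝ := 4 * (2 * γ - 1) * (1 - γ) * x ^ (2 * γ - 2) / x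

variable {γ x : ℝ}

lemma powerPotential_one (γ : ℝ) : powerPotential γ 1 = 0 := by
  simp [powerPotential]

lemma powerPotential_zero (hγ0 : 0 < γ) : powerPotential γ 0 = 1 / γ - 1 := by
  simp [powerPotential, hγ0.ne']

lemma continuous_powerPotential (hγ0 : 0 < γ) : Continuous (powerPotential γ) := by
  have := continuous_id.rpow_const (p := 2 * γ) fun _ : ℝ => Or.inr (by positivity)
  unfold powerPotential
  fun_prop

lemma rpow_eq_sq_mul_rpow_sub_two (hx : 0 < x) (p : ℝ) : x ^ p = x ^ 2 * x ^ (p - 2) := by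
  rw [← rpow_natCast x 2, ← rpow_add hx]
  norm_num

lemma hasDerivAt_rpow_sub_two (hx : 0 < x) (γ : ℝ) :
    HasDerivAt (fun y : ℝ => y ^ (2 * γ - 2)) ((2 * γ - 2) * x ^ (2 * γ - 2) / x) x := by
  have h := hasDerivAt_rpow_const (p := 2 * γ - 2) (Or.inl hx.ne')
  rwa [rpow_sub_one hx.ne', ← mul_div_assoc] at h

lemma hasDerivAt_powerPotential (hγ0 : γ ≠ 0) (hx : 0 < x) :
    HasDerivAt (powerPotential γ) (powerPotential' γ x) x := by
  have hpow := hasDerivAt_rpow_const (x := x) (p := 2 * γ) (Or.inl hx.ne')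
  refine (((hasDerivAt_pow 2 x).sub (hpow.div_const γ)).add_const _).congr_deriv ?_
  rw [powerPotential', rpow_sub_one hx.ne', rpow_eq_sq_mul_rpow_sub_two hx (2 * γ)]
  field_simp
  ring

lemma hasDerivAt_powerPotential' (γ : ℝ) (hx : 0 < x) :
    HasDerivAt (powerPotential' γ) (powerPotential'' γ x) x := by
  refine (((hasDerivAt_id x).const_mul 2).mul
    ((hasDerivAt_rpow_sub_two hx γ).const_sub 1)).congr_deriv ?_
  simp only [powerPotential'', id_eq]
  field_simp
  ring

lemma hasDerivAt_powerPotential'' (γ : ℝ) (hx : 0 < x) :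
    HasDerivAt (powerPotential'' γ) (powerPotential''' γ x) x := by
  refine ((((hasDerivAt_rpow_sub_two hx γ).const_mul (2 * γ - 1)).const_sub 1).const_mul
    2).congr_deriv ?_
  rw [powerPotential''']
  ring

lemma powerPotential'_neg (hγ1 : γ < 1) (hx : 0 < x) (hx1 : x < 1) : powerPotential' γ x < 0 := by
  have := one_lt_rpow_of_pos_of_lt_one_of_neg hx hx1 (by linarith : 2 * γ - 2 < 0)
  exact mul_neg_of_pos_of_neg (by positivity) (sub_neg.2 this)

lemma powerPotential'_pos (hγ1 : γ < 1) (hx1 : 1 < x) : 0 < powerPotential' γ x := by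
  have := rpow_lt_one_of_one_lt_of_neg hx1 (by linarith : 2 * γ - 2 < 0)
  exact mul_pos (by linarith) (sub_pos.2 this)

lemma Ioo_subset_image_powerPotential_left (hγ0 : 0 < γ) :
    Ioo 0 (1 / γ - 1) ⊆ powerPotential γ '' (Ioi 0 ∩ Iio 1) := by
  have h := intermediate_value_Ioo' zero_le_one (continuous_powerPotential hγ0).continuousOn
  rwa [powerPotential_one, powerPotential_zero hγ0] at h

lemma Ioo_subset_image_powerPotential_right (hγ0 : 0 < γ) (hγ1 : γ < 1) :
    Ioo 0 (1 / γ - 1) ⊆ powerPotential γ '' (Ioi 0 ∩ Ioi 1) := by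
  obtain ⟨b, hb1, hbγ⟩ : ∃ b : ℝ, 1 < b ∧ b ^ (2 * γ - 2) = γ :=
    ⟨γ ^ (1 / (2 * γ - 2)),
      one_lt_rpow_of_pos_of_lt_one_of_neg hγ0 hγ1 (one_div_neg.2 (by linarith)), by
        rw [← rpow_mul hγ0.le, one_div_mul_cancel (by linarith), rpow_one]⟩
  have hb0 : 0 < b := zero_lt_one.trans hb1
  have hb : powerPotential γ b = 1 / γ - 1 := by
    rw [powerPotential, rpow_eq_sq_mul_rpow_sub_two hb0, hbγ, mul_div_cancel_right₀ _ hγ0.ne',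
      sub_self, zero_add]
  have h := intermediate_value_Ioo hb1.le (continuous_powerPotential hγ0).continuousOn
  rw [powerPotential_one, hb] at h
  exact h.trans (image_mono fun x hx => ⟨zero_lt_one.trans hx.1, hx.1⟩)

lemma isPotentialWell_powerPotential (hγ0 : 0 < γ) (hγ1 : γ < 1) :
    IsPotentialWell (powerPotential γ) (powerPotential' γ) (Ioi 0) 1 (1 / γ - 1) where
  isOpen := isOpen_Ioi
  ordConnected := ordConnected_Ioi
  bottom_mem := zero_lt_one' ℝ
  apply_bottom := powerPotential_one γ
  hasDerivAt _ hx := hasDerivAt_powerPotential hγ0.ne' hx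
  deriv_neg _ hx hx1 := powerPotential'_neg hγ1 hx hx1
  deriv_pos _ _ hx1 := powerPotential'_pos hγ1 hx1
  subset_image_left := Ioo_subset_image_powerPotential_left hγ0
  subset_image_right := Ioo_subset_image_powerPotential_right hγ0 hγ1

/-- The coefficient `V'''(1) / (3 V''(1)²)` for `V = powerPotential γ`: the only `k` for which the
cubic term of `V'² − 2 V V'' + k V'³` at `x = 1` vanishes, as it must for a positive function. -/
def powerSkew (γ : ℝ) : ℝ := (2 * γ - 1) / (12 * (1 - γ))

/-- The function `V'² − 2 V V'' + k V'³` for `V = powerPotential γ` and `k = powerSkew γ`. -/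
def powerPsi (γ x : ℝ) : ℝ :=
  powerPotential' γ x ^ 2 - 2 * powerPotential γ x * powerPotential'' γ x +
    powerSkew γ * powerPotential' γ x ^ 3

/-- The quotient of the derivative of `powerPsi γ` by `2 V'''` for `V = powerPotential γ`. -/
def powerGap (γ x : ℝ) : ℝ :=
  x * powerPotential' γ x ^ 2 * powerPotential'' γ x / (32 * (1 - γ) ^ 2 * x ^ (2 * γ - 2)) -
    powerPotential γ x

lemma powerPsi_one (γ : ℝ) : powerPsi γ 1 = 0 := by
  simp [powerPsi, powerPotential', powerPotential_one]

lemma powerGap_one (γ : ℝ) : powerGap γ 1 = 0 := by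
  simp [powerGap, powerPotential', powerPotential_one]

lemma powerPotential'''_pos (hγ : 1 / 2 < γ) (hγ1 : γ < 1) (hx : 0 < x) :
    0 < powerPotential''' γ x := by
  have : 0 < 2 * γ - 1 := by linarith
  have : 0 < 1 - γ := sub_pos.2 hγ1
  unfold powerPotential'''
  positivity

lemma hasDerivAt_powerPsi (hγ0 : γ ≠ 0) (hγ1 : γ ≠ 1) (hx : 0 < x) :
    HasDerivAt (powerPsi γ) (2 * powerPotential''' γ x * powerGap γ x) x := by
  have hV := hasDerivAt_powerPotential hγ0 hx
  have hV' := hasDerivAt_powerPotential' γ hx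
  have hV'' := hasDerivAt_powerPotential'' γ hx
  have : 1 - γ ≠ 0 := sub_ne_zero.2 hγ1.symm
  have := rpow_pos_of_pos hx (2 * γ - 2)
  refine (((hV'.pow 2).sub ((hV.const_mul 2).mul hV'')).add
    ((hV'.pow 3).const_mul (powerSkew γ))).congr_deriv ?_
  rw [powerGap, powerSkew, powerPotential''']
  field_simp
  ring

lemma hasDerivAt_powerGap (hγ0 : γ ≠ 0) (hγ1 : γ ≠ 1) (hx : 0 < x) :
    HasDerivAt (powerGap γ)
      (x / (4 * (1 - γ) ^ 2 * x ^ (2 * γ - 2)) *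
        (x * (1 - x ^ (2 * γ - 2)) ^ 2 *
            (5 - 2 * γ - (2 * γ - 1) * (4 * γ - 1) * x ^ (2 * γ - 2)) +
          8 * (1 - γ) ^ 2 * x ^ (2 * γ - 2) * ((1 - x ^ (2 * γ - 2)) * (x - 1)))) x := by
  have : 1 - γ ≠ 0 := sub_ne_zero.2 hγ1.symm
  have := rpow_pos_of_pos hx (2 * γ - 2)
  have hV' := hasDerivAt_powerPotential' γ hx
  have hV'' := hasDerivAt_powerPotential'' γ hx
  have hnum := ((hasDerivAt_id x).mul (hV'.pow 2)).mul hV''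
  have hden := (hasDerivAt_rpow_sub_two hx γ).const_mul (32 * (1 - γ) ^ 2)
  refine ((hnum.div hden (by positivity)).sub (hasDerivAt_powerPotential hγ0 hx)).congr_deriv ?_
  simp only [powerPotential', powerPotential'', powerPotential''', id_eq, Pi.mul_apply,
    Pi.pow_apply]
  field_simp
  ring

lemma ordConnected_powerPotential''_pos (hγ : 1 / 2 < γ) (hγ1 : γ < 1) :
    {x ∈ Ioi 0 | 0 < powerPotential'' γ x}.OrdConnected := by
  have hmono : StrictMonoOn (powerPotential'' γ) (Ioi 0) :=
    strictMonoOn_of_hasDerivAt_pos_of_ne (m := 0) ordConnected_Ioi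
      (fun x hx => hasDerivAt_powerPotential'' γ hx)
      fun x hx _ => powerPotential'''_pos hγ hγ1 hx
  refine ⟨fun x hx y _ z hz => ?_⟩
  have hz0 : z ∈ Ioi 0 := lt_of_lt_of_le (mem_Ioi.1 hx.1) hz.1
  exact ⟨hz0, hx.2.trans_le (hmono.monotoneOn hx.1 hz0 hz.1)⟩

lemma powerPotential''_pos_of_one_le (hγ1 : γ < 1) (hx : 1 ≤ x) : 0 < powerPotential'' γ x := by
  have he : x ^ (2 * γ - 2) ≤ 1 := rpow_le_one_of_one_le_of_nonpos hx (by linarith)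
  have hpos : 0 < (1 - γ) * x ^ (2 * γ - 2) :=
    mul_pos (sub_pos.2 hγ1) (rpow_pos_of_pos (one_pos.trans_le hx) _)
  unfold powerPotential''
  linarith

lemma one_sub_rpow_mul_sub_one_pos (hx : 0 < x) (hx1 : x ≠ 1) {p : ℝ} (hp : p < 0) :
    0 < (1 - x ^ p) * (x - 1) := by
  rcases hx1.lt_or_gt with h | h
  · exact mul_pos_of_neg_of_neg (sub_neg.2 (one_lt_rpow_of_pos_of_lt_one_of_neg hx h hp))
      (sub_neg.2 h)
  · exact mul_pos (sub_pos.2 (rpow_lt_one_of_one_lt_of_neg h hp)) (sub_pos.2 h)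

lemma strictMonoOn_powerGap (hγ : 1 / 2 < γ) (hγ1 : γ < 1) :
    StrictMonoOn (powerGap γ) {x ∈ Ioi 0 | 0 < powerPotential'' γ x} := by
  refine strictMonoOn_of_hasDerivAt_pos_of_ne (m := 1) (ordConnected_powerPotential''_pos hγ hγ1)
    (fun x hx => hasDerivAt_powerGap (by linarith) hγ1.ne hx.1) fun x ⟨hx, hx''⟩ hx1 => ?_
  have hx : 0 < x := hx
  have := rpow_pos_of_pos hx (2 * γ - 2)
  have : 0 < 1 - γ := sub_pos.2 hγ1
  have hsign : 0 < (1 - x ^ (2 * γ - 2)) * (x - 1) :=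
    one_sub_rpow_mul_sub_one_pos hx hx1 (by linarith)
  have hce : (2 * γ - 1) * x ^ (2 * γ - 2) < 1 := by
    unfold powerPotential'' at hx''
    linarith
  have hbracket : 0 < 5 - 2 * γ - (2 * γ - 1) * (4 * γ - 1) * x ^ (2 * γ - 2) := by
    linarith [mul_lt_mul_of_pos_left hce (by linarith : 0 < 4 * γ - 1)]
  positivity

lemma powerGap_neg (hγ : 1 / 2 < γ) (hγ1 : γ < 1) (hx : 0 < x) (hx1 : x < 1) :
    powerGap γ x < 0 := by
  rcases le_or_gt (powerPotential'' γ x) 0 with hx'' | hx''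
  · have hV : 0 < powerPotential γ x :=
      (isPotentialWell_powerPotential (by linarith) hγ1).pos hx hx1.ne
    have hquot : x * powerPotential' γ x ^ 2 * powerPotential'' γ x /
        (32 * (1 - γ) ^ 2 * x ^ (2 * γ - 2)) ≤ 0 :=
      div_nonpos_of_nonpos_of_nonneg (mul_nonpos_of_nonneg_of_nonpos (by positivity) hx'')
        (mul_nonneg (by positivity) (rpow_nonneg hx.le _))
    exact sub_neg.2 (hquot.trans_lt hV)
  · rw [← powerGap_one γ]
    exact strictMonoOn_powerGap hγ hγ1 ⟨hx, hx''⟩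
      ⟨mem_Ioi.2 one_pos, powerPotential''_pos_of_one_le hγ1 le_rfl⟩ hx1

lemma powerGap_pos (hγ : 1 / 2 < γ) (hγ1 : γ < 1) (hx1 : 1 < x) : 0 < powerGap γ x := by
  rw [← powerGap_one γ]
  exact strictMonoOn_powerGap hγ hγ1
    ⟨mem_Ioi.2 one_pos, powerPotential''_pos_of_one_le hγ1 le_rfl⟩
    ⟨one_pos.trans hx1, powerPotential''_pos_of_one_le hγ1 hx1.le⟩ hx1

lemma powerPsi_pos (hγ : 1 / 2 < γ) (hγ1 : γ < 1) (hx : 0 < x) (hx1 : x ≠ 1) :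
    0 < powerPsi γ x := by
  rw [← powerPsi_one γ]
  have hV''' : ∀ y ∈ Ioi (0 : ℝ), 0 < 2 * powerPotential''' γ y := fun y hy =>
    mul_pos two_pos (powerPotential'''_pos hγ hγ1 hy)
  exact lt_of_hasDerivAt_neg_of_hasDerivAt_pos (s := Ioi 0) ordConnected_Ioi (mem_Ioi.2 one_pos)
    (fun y hy => hasDerivAt_powerPsi (by linarith) hγ1.ne hy)
    (fun y hy hy1 => mul_neg_of_pos_of_neg (hV''' y hy) (powerGap_neg hγ hγ1 hy hy1))
    (fun y hy hy1 => mul_pos (hV''' y hy) (powerGap_pos hγ hγ1 hy1)) hx hx1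

theorem strictMonoOn_period_powerPotential (hγ : 1 / 2 < γ) (hγ1 : γ < 1) :
    StrictMonoOn (period (powerPotential γ) (Ioi 0)) (Ioo 0 (1 / γ - 1)) :=
  (isPotentialWell_powerPotential (by linarith) hγ1).strictMonoOn_period (powerSkew γ)
    (fun _ hx => hasDerivAt_powerPotential' γ hx) fun _ hx hx1 => powerPsi_pos hγ hγ1 hx hx1

end PowerPotential

section Scaling

open scoped Pointwise

variable {γ α : ℝ}

/-- The length `ℓ` in units of which `f_α` becomes an energy minus the potential
`powerPotential γ`; it is the point where `t² - α t^{2γ}` is minimal. -/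
def lengthScale (γ α : ℝ) : ℝ := (α * γ) ^ (1 / (2 * (1 - γ)))

/-- The energy of the oscillation in the potential `powerPotential γ` obtained from `f_α` by
rescaling lengths: the value of `f_α / ℓ²` at the bottom `t = ℓ` of the well. -/
def energy (γ α : ℝ) : ℝ := (1 / γ - 1) - 1 / lengthScale γ α ^ 2

lemma lengthScale_pos (hγ0 : 0 < γ) (hα : 0 < α) : 0 < lengthScale γ α :=
  rpow_pos_of_pos (mul_pos hα hγ0) _

lemma lengthScale_sq (hγ0 : 0 ≤ γ) (hα : 0 ≤ α) :
    lengthScale γ α ^ 2 = (α * γ) ^ (1 / (1 - γ)) := by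
  rw [lengthScale, ← rpow_mul_natCast (mul_nonneg hα hγ0)]
  congr 1
  rw [Nat.cast_ofNat, ← div_div, div_right_comm, div_mul_cancel₀ _ two_ne_zero]

lemma strictMonoOn_lengthScale (hγ0 : 0 < γ) (hγ1 : γ < 1) :
    StrictMonoOn (lengthScale γ) (Ioi 0) := fun _ ha _ _ hab =>
  rpow_lt_rpow (mul_pos ha hγ0).le (mul_lt_mul_of_pos_right hab hγ0)
    (one_div_pos.2 (mul_pos two_pos (sub_pos.2 hγ1)))

lemma strictMonoOn_energy (hγ0 : 0 < γ) (hγ1 : γ < 1) : StrictMonoOn (energy γ) (Ioi 0) := by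
  intro a ha b hb hab
  have hpos : 0 < lengthScale γ a := lengthScale_pos hγ0 ha
  have hlt : lengthScale γ a < lengthScale γ b := strictMonoOn_lengthScale hγ0 hγ1 ha hb hab
  unfold energy
  gcongr

lemma mul_lengthScale_rpow (hγ0 : 0 < γ) (hγ1 : γ ≠ 1) (hα : 0 < α) :
    α * lengthScale γ α ^ (2 * γ) = lengthScale γ α ^ 2 / γ := by
  have hpow : lengthScale γ α ^ (2 * γ - 2) = (α * γ)⁻¹ := by
    have : 1 - γ ≠ 0 := sub_ne_zero.2 hγ1.symm
    rw [lengthScale, ← rpow_mul (mul_pos hα hγ0).le, ← rpow_neg_one]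
    congr 1
    field_simp
    ring
  rw [rpow_eq_sq_mul_rpow_sub_two (lengthScale_pos hγ0 hα), hpow]
  field_simp

lemma fA_lengthScale_mul (hγ0 : 0 < γ) (hγ1 : γ ≠ 1) (hα : 0 < α) {x : ℝ} (hx : 0 ≤ x) :
    fA γ α (lengthScale γ α * x) =
      lengthScale γ α ^ 2 * (energy γ α - powerPotential γ x) := by
  have hl : 0 < lengthScale γ α := lengthScale_pos hγ0 hα
  rw [fA, mul_rpow hl.le hx, ← mul_assoc, mul_lengthScale_rpow hγ0 hγ1 hα, energy,
    powerPotential]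
  field_simp
  ring

lemma div_one_sub_lt_lengthScale_sq (hγ0 : 0 < γ) (hγ1 : γ < 1)
    (hα : γ ^ (-γ) * (1 - γ) ^ (γ - 1) < α) : γ / (1 - γ) < lengthScale γ α ^ 2 := by
  have hd : 0 < 1 - γ := sub_pos.2 hγ1
  have hα0 : 0 < α := lt_trans (by positivity) hα
  have hthreshold : γ ^ (-γ) * (1 - γ) ^ (γ - 1) * γ = (γ / (1 - γ)) ^ (1 - γ) := by
    rw [div_rpow hγ0.le hd.le, ← neg_sub 1 γ, rpow_neg hd.le, sub_eq_neg_add 1 γ,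
      rpow_add_one hγ0.ne']
    ring
  have hlt : (γ / (1 - γ)) ^ (1 - γ) < α * γ :=
    hthreshold ▸ mul_lt_mul_of_pos_right hα hγ0
  rw [lengthScale_sq hγ0.le hα0.le]
  calc γ / (1 - γ) = ((γ / (1 - γ)) ^ (1 - γ)) ^ (1 / (1 - γ)) := by
        rw [← rpow_mul (by positivity), mul_one_div_cancel hd.ne', rpow_one]
    _ < (α * γ) ^ (1 / (1 - γ)) := rpow_lt_rpow (by positivity) hlt (by positivity)

lemma energy_mem_Ioo (hγ0 : 0 < γ) (hγ1 : γ < 1) (hα : γ ^ (-γ) * (1 - γ) ^ (γ - 1) < α) :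
    energy γ α ∈ Ioo 0 (1 / γ - 1) := by
  have hd : 0 < 1 - γ := sub_pos.2 hγ1
  have hsq : γ / (1 - γ) < lengthScale γ α ^ 2 := div_one_sub_lt_lengthScale_sq hγ0 hγ1 hα
  have hsq0 : 0 < lengthScale γ α ^ 2 := (div_pos hγ0 hd).trans hsq
  refine ⟨sub_pos.2 ?_, sub_lt_self _ (one_div_pos.2 hsq0)⟩
  calc 1 / lengthScale γ α ^ 2 < 1 / (γ / (1 - γ)) := one_div_lt_one_div_of_lt (by positivity) hsq
    _ = 1 / γ - 1 := by field_simp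

lemma setOf_fA_pos (hγ0 : 0 < γ) (hγ1 : γ ≠ 1) (hα : 0 < α) :
    {t | 0 < t ∧ 0 < fA γ α t} =
      lengthScale γ α • {x ∈ Ioi 0 | powerPotential γ x < energy γ α} := by
  have hl : 0 < lengthScale γ α := lengthScale_pos hγ0 hα
  ext t
  obtain ⟨x, rfl⟩ : ∃ x, t = lengthScale γ α * x := ⟨t / _, (mul_div_cancel₀ t hl.ne').symm⟩
  rw [← smul_eq_mul, smul_mem_smul_set_iff₀ hl.ne', smul_eq_mul]
  simp only [mem_ofPred_eq, mem_Ioi, mul_pos_iff_of_pos_left hl]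
  refine and_congr_right fun hx => ?_
  rw [fA_lengthScale_mul hγ0 hγ1 hα hx.le, mul_pos_iff_of_pos_left (by positivity), sub_pos]

lemma I0_eq_period_energy (hγ0 : 0 < γ) (hγ1 : γ < 1)
    (hα : γ ^ (-γ) * (1 - γ) ^ (γ - 1) < α) :
    I0 γ α = period (powerPotential γ) (Ioi 0) (energy γ α) := by
  have : 0 < 1 - γ := sub_pos.2 hγ1
  have hα0 : 0 < α := lt_trans (by positivity) hα
  have hl : 0 < lengthScale γ α := lengthScale_pos hγ0 hα0
  have hV := isPotentialWell_powerPotential hγ0 hγ1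
  rw [I0, omegaMinus, omegaPlus, setOf_fA_pos hγ0 hγ1.ne hα0, Real.sInf_smul_of_nonneg hl.le,
    Real.sSup_smul_of_nonneg hl.le, smul_eq_mul, smul_eq_mul,
    ← intervalIntegral.mul_integral_comp_mul_left,
    hV.intervalIntegral_sublevel (energy_mem_Ioo hγ0 hγ1 hα), ← integral_const_mul, period]
  refine setIntegral_congr_fun (hV.ordConnected_sublevel _).measurableSet fun x hx => ?_
  have hx0 : 0 < x := hx.1
  simp only [fA_lengthScale_mul hγ0 hγ1.ne hα0 hx0.le, sqrt_mul (sq_nonneg (lengthScale γ α)),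
    sqrt_sq hl.le]
  field_simp

end Scaling

theorem I0_strictMono_general {γ : ℝ} (hγ : 1 / 2 < γ) (hγ1 : γ < 1) :
    StrictMonoOn (I0 γ) (Ioi (γ ^ (-γ) * (1 - γ) ^ (γ - 1))) := by
  have hγ0 : 0 < γ := by linarith
  have hthreshold : 0 < γ ^ (-γ) * (1 - γ) ^ (γ - 1) :=
    mul_pos (rpow_pos_of_pos hγ0 _) (rpow_pos_of_pos (sub_pos.2 hγ1) _)
  intro α hα β hβ hαβ
  rw [I0_eq_period_energy hγ0 hγ1 hα, I0_eq_period_energy hγ0 hγ1 hβ]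
  exact strictMonoOn_period_powerPotential hγ hγ1 (energy_mem_Ioo hγ0 hγ1 hα)
    (energy_mem_Ioo hγ0 hγ1 hβ)
    (strictMonoOn_energy hγ0 hγ1 (hthreshold.trans hα) (hthreshold.trans hβ) hαβ)

lemma two_div_pi_sq_lt_half : 2 / π ^ 2 < 1 / 2 := by
  rw [div_lt_div_iff₀ (by positivity) two_pos]
  nlinarith [pi_gt_three]

/-- For `γ = 1 − 2π⁻²`, the function `I₀` is strictly increasing on
`(γ^{−γ}(1−γ)^{γ−1}, ∞)`. -/
theorem I0_strictMono (γ : ℝ) (hγ : γ = 1 - 2 / π ^ 2) :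
    StrictMonoOn (I0 γ) (Ioi (γ ^ (-γ) * (1 - γ) ^ (γ - 1))) := by
  have hpos : 0 < 2 / π ^ 2 := by positivity
  exact I0_strictMono_general (by linarith [two_div_pi_sq_lt_half]) (by linarith)
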